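/- For any two vertices s and s' of G, the Biggs–Merino polynomials with sinks s and s' coincide: B(G,s;y) = B(G,s';y) in ℤ[y]. In other words, the Biggs–Merino polynomial of a strongly connected finite directed multigraph does not depend on the choice of the sink vertex. -/

import Mathlib

open Finset Polynomial

namespace SandpileBM

variable {V E : Type} [Fintype V] [DecidableEq V] [Fintype E] [DecidableEq E]

/-- The number of edges from `v` to `w` in the multigraph given by `src`, `tgt`. -/
def numEdges (src tgt : E → V) (v w : V) : ℕ :=
  (Finset.univ.filter fun e => src e = v ∧ tgt e = w).card

/-- The out-degree of a vertex. -/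
def outdeg (src : E → V) (v : V) : ℕ :=
  (Finset.univ.filter fun e => src e = v).card

/-- The in-degree of a vertex. -/
def indeg (tgt : E → V) (v : V) : ℕ :=
  (Finset.univ.filter fun e => tgt e = v).card

/-- The digraph is strongly connected: any vertex is reachable from any other by
a directed path. -/
def StronglyConnected (src tgt : E → V) : Prop :=
  ∀ v w : V, Relation.ReflTransGen (fun a b => ∃ e : E, src e = a ∧ tgt e = b) v w

/-- Result of firing the vertex `v` on the chip configuration `c` (sinkless model). -/
def fire (src tgt : E → V) (c : V → ℕ) (v : V) : V → ℕ :=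
  fun w => c w + numEdges src tgt v w - (if w = v then outdeg src v else 0)

/-- One legal firing move in the sinkless model. -/
def FireStep (src tgt : E → V) (c d : V → ℕ) : Prop :=
  ∃ v : V, outdeg src v ≤ c v ∧ d = fire src tgt c v

/-- `Reach c d`: `d` is obtained from `c` by a finite sequence of legal firing moves. -/
def Reach (src tgt : E → V) : (V → ℕ) → (V → ℕ) → Prop :=
  Relation.ReflTransGen (FireStep src tgt)

/-- Stability of a chip configuration. -/
def Stable (src : E → V) (c : V → ℕ) : Prop :=
  ∀ v : V, c v < outdeg src v

/-- A chip configuration is recurrent if it is not stable and every configuration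
accessible from it can reach it back. -/
def Recurrent (src tgt : E → V) (c : V → ℕ) : Prop :=
  ¬ Stable src c ∧ ∀ d : V → ℕ, Reach src tgt c d → Reach src tgt d c

/-- Level (total number of chips) of a chip configuration. -/
def lvl (c : V → ℕ) : ℕ := ∑ v : V, c v

/-- Indicator function of the vertex `s`. -/
def deltaS (s : V) : V → ℕ := fun v => if v = s then 1 else 0

/-- Result of firing the vertex `v` on an `s`-configuration. -/
def sfire (src tgt : E → V) (s : V) (c : {v : V // v ≠ s} → ℕ) (v : {v : V // v ≠ s}) :
    {v : V // v ≠ s} → ℕ :=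
  fun w => c w + numEdges src tgt v.1 w.1 - (if w = v then outdeg src v.1 else 0)

/-- One legal s-firing move. -/
def SFireStep (src tgt : E → V) (s : V) (c d : {v : V // v ≠ s} → ℕ) : Prop :=
  ∃ v : {v : V // v ≠ s}, outdeg src v.1 ≤ c v ∧ d = sfire src tgt s c v

/-- `SReach c d`: `d` is obtained from `c` by a finite sequence of legal s-firing moves. -/
def SReach (src tgt : E → V) (s : V) :
    ({v : V // v ≠ s} → ℕ) → ({v : V // v ≠ s} → ℕ) → Prop :=
  Relation.ReflTransGen (SFireStep src tgt s)

/-- Stability of an `s`-configuration. -/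
def SStable (src : E → V) (s : V) (c : {v : V // v ≠ s} → ℕ) : Prop :=
  ∀ v : {v : V // v ≠ s}, c v < outdeg src v.1

/-- The stabilization `c°` of an `s`-configuration: the (for strongly connected digraphs,
unique) stable `s`-configuration reachable from `c` by legal s-firing moves. -/
noncomputable def stab (src tgt : E → V) (s : V) (c : {v : V // v ≠ s} → ℕ) :
    {v : V // v ≠ s} → ℕ :=
  Classical.epsilon fun d => SReach src tgt s c d ∧ SStable src s d

/-- An `s`-configuration `c` is s-recurrent if every `s`-configuration can be completed
to one whose stabilization is `c`. -/
def SRecurrent (src tgt : E → V) (s : V) (c : {v : V // v ≠ s} → ℕ) : Prop :=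
  ∀ c₁ : {v : V // v ≠ s} → ℕ, ∃ c₂ : {v : V // v ≠ s} → ℕ,
    stab src tgt s (c₁ + c₂) = c

/-- `β_s`, recording the number of edges from `s` to each other vertex. -/
def betaS (src tgt : E → V) (s : V) : {v : V // v ≠ s} → ℕ :=
  fun v => numEdges src tgt s v.1

/-- The relation `~_s` on s-recurrent configurations: `d = (c + k·β_s)°` for some `k`. -/
def SEquiv (src tgt : E → V) (s : V) (c d : {v : V // v ≠ s} → ℕ) : Prop :=
  ∃ k : ℕ, stab src tgt s (c + k • betaS src tgt s) = d

/-- Restriction of a chip configuration to `V ∖ {s}`. -/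
def restrictS (s : V) (c : V → ℕ) : {v : V // v ≠ s} → ℕ := fun v => c v.1

/-- Extension `c̄` of an `s`-configuration by `0` at `s`. -/
def extendS (s : V) (c : {v : V // v ≠ s} → ℕ) : V → ℕ :=
  fun v => if h : v = s then 0 else c ⟨v, h⟩

/-- The s-index `χ(c)`: the least `k` such that `c̄ + k·δ_s` is recurrent. -/
noncomputable def sIndex (src tgt : E → V) (s : V) (c : {v : V // v ≠ s} → ℕ) : ℕ :=
  sInf {k : ℕ | Recurrent src tgt (extendS s c + k • deltaS s)}

/-- `φ(c) := c̄ + χ(c)·δ_s`. -/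
noncomputable def phi (src tgt : E → V) (s : V) (c : {v : V // v ≠ s} → ℕ) : V → ℕ :=
  extendS s c + sIndex src tgt s c • deltaS s

/-- The s-level `slvl(c) := χ(c) + Σ_{v ≠ s} c(v)`. -/
noncomputable def slvl (src tgt : E → V) (s : V) (c : {v : V // v ≠ s} → ℕ) : ℕ :=
  sIndex src tgt s c + ∑ v : {v : V // v ≠ s}, c v

/-- The d-level `dlvl(c) := deg⁺(s) + Σ_{v ≠ s} c(v)`. -/
def dlvl (src : E → V) (s : V) (c : {v : V // v ≠ s} → ℕ) : ℕ :=
  outdeg src s + ∑ v : {v : V // v ≠ s}, c v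

/-- The set (as a type) of recurrent chip configurations. -/
abbrev RecL (src tgt : E → V) := {c : V → ℕ // Recurrent src tgt c}

/-- The setoid on recurrent configurations generated by the relation `~` (i.e. `⤳`). -/
def recLSetoid (src tgt : E → V) : Setoid (RecL src tgt) :=
  Relation.EqvGen.setoid fun a b => Reach src tgt a.1 b.1

/-- The set of `~`-classes of recurrent configurations. -/
abbrev RecLQuot (src tgt : E → V) := Quotient (recLSetoid src tgt)

/-- The set (as a type) of s-recurrent configurations. -/
abbrev RecS (src tgt : E → V) (s : V) := {c : {v : V // v ≠ s} → ℕ // SRecurrent src tgt s c}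

/-- The setoid on s-recurrent configurations generated by the relation `~_s`. -/
def recSSetoid (src tgt : E → V) (s : V) : Setoid (RecS src tgt s) :=
  Relation.EqvGen.setoid fun a b => SEquiv src tgt s a.1 b.1

/-- The set of `~_s`-classes of s-recurrent configurations. -/
abbrev RecSQuot (src tgt : E → V) (s : V) := Quotient (recSSetoid src tgt s)

/-- The level of a `~`-class of recurrent configurations (level is constant on classes). -/
noncomputable def lvlClass (src tgt : E → V) (q : RecLQuot src tgt) : ℕ :=
  sSup ((fun c : RecL src tgt => lvl c.1) '' {c | Quotient.mk (recLSetoid src tgt) c = q})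

/-- The s-level of a `~_s`-class (s-level is constant on classes). -/
noncomputable def slvlClass (src tgt : E → V) (s : V) (q : RecSQuot src tgt s) : ℕ :=
  sSup ((fun c : RecS src tgt s => slvl src tgt s c.1) ''
    {c | Quotient.mk (recSSetoid src tgt s) c = q})

/-- The d-level of a `~_s`-class: the maximum d-level over the class. -/
noncomputable def dlvlClass (src tgt : E → V) (s : V) (q : RecSQuot src tgt s) : ℕ :=
  sSup ((fun c : RecS src tgt s => dlvl src s c.1) ''
    {c | Quotient.mk (recSSetoid src tgt s) c = q})

/-- The Biggs–Merino polynomial `B(G,s;y) = Σ_{[c] ∈ Rec(G,s)/~_s} y^{dlvl([c])}`. -/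
noncomputable def BM (src tgt : E → V) (s : V) : Polynomial ℤ :=
  ∑ᶠ q : RecSQuot src tgt s, X ^ dlvlClass src tgt s q

/-- `LegalSeq l c d`: firing the vertices in the list `l` in order is a sequence of
legal firing moves transforming `c` into `d` (sinkless model). -/
def LegalSeq (src tgt : E → V) : List V → (V → ℕ) → (V → ℕ) → Prop
  | [], c, d => d = c
  | v :: l, c, d => outdeg src v ≤ c v ∧ LegalSeq src tgt l (fire src tgt c v) d

/-- `SLegalSeq l c d`: firing the vertices in the list `l` in order is a sequence of
legal s-firing moves transforming `c` into `d`. -/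
def SLegalSeq (src tgt : E → V) (s : V) :
    List {v : V // v ≠ s} → ({v : V // v ≠ s} → ℕ) → ({v : V // v ≠ s} → ℕ) → Prop
  | [], c, d => d = c
  | v :: l, c, d => outdeg src v.1 ≤ c v ∧ SLegalSeq src tgt s l (sfire src tgt s c v) d

/-- The configuration obtained from `c` after firing the vertices of `l` in order. -/
def iterFire (src tgt : E → V) (c : V → ℕ) (l : List V) : V → ℕ :=
  l.foldl (fire src tgt) c

/-- The Laplacian of the digraph applied to an integer vector:
`(Δq)(v) = deg⁺(v)·q(v) − Σ_w A(w,v)·q(w)`. -/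
def lapApply (src tgt : E → V) (q : V → ℤ) : V → ℤ :=
  fun v => (outdeg src v : ℤ) * q v - ∑ w : V, (numEdges src tgt w v : ℤ) * q w

/-- `r` is the primitive period vector of the digraph: it has positive entries with
gcd `1`, lies in the kernel of the Laplacian, and generates this kernel. -/
def IsPeriodVector (src tgt : E → V) (r : V → ℕ) : Prop :=
  (∀ v : V, 0 < r v) ∧ Finset.univ.gcd r = 1 ∧
    lapApply src tgt (fun v => (r v : ℤ)) = 0 ∧
    ∀ q : V → ℤ, lapApply src tgt q = 0 → ∃ k : ℤ, q = k • fun v => (r v : ℤ)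

/-- The Laplacian matrix of the digraph. -/
def lapMatrix (src tgt : E → V) : Matrix V V ℤ :=
  Matrix.of fun v w =>
    if v = w then (outdeg src v : ℤ) - numEdges src tgt v v
    else -(numEdges src tgt w v : ℤ)

/-- The determinant of the reduced Laplacian obtained by deleting the row and
column indexed by `v`. -/
def reducedLapDet (src tgt : E → V) (v : V) : ℤ :=
  (((lapMatrix src tgt).submatrix (fun a : {w : V // w ≠ v} => a.1)
    (fun a : {w : V // w ≠ v} => a.1)).det)

/-- The period constant `α := gcd_{v ∈ V} det Δ_v`. -/
def periodConstant (src tgt : E → V) : ℤ :=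
  Finset.univ.gcd (reducedLapDet src tgt)

/-- `IsWalk l a b`: the list of edges `l` forms a directed walk from `a` to `b`. -/
def IsWalk (src tgt : E → V) : List E → V → V → Prop
  | [], a, b => a = b
  | e :: l, a, b => src e = a ∧ IsWalk src tgt l (tgt e) b

/-- `IsPath l a b`: the list of edges `l` forms a directed path from `a` to `b`:
all visited vertices are distinct (except that the final vertex is allowed to
coincide with the starting vertex). -/
def IsPath (src tgt : E → V) (l : List E) (a b : V) : Prop :=
  IsWalk src tgt l a b ∧ (l.map tgt).Nodup ∧ a ∉ (l.map tgt).dropLast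

/-- `T` is an arborescence rooted at `s`: for every vertex `v` there is a unique
directed path from `s` to `v` using only edges of `T`. -/
def IsArborescence (src tgt : E → V) (s : V) (T : Finset E) : Prop :=
  ∀ v : V, ∃! l : List E, (∀ e ∈ l, e ∈ T) ∧ IsPath src tgt l s v

/-- The edge `e ∉ T` is externally active for the arborescence `T` (w.r.t. the linear
order on `E`): where `P₁`, `P₂` are the two edge-disjoint directed paths in `T ∪ {e}`
sharing their starting vertex and ending at `tgt e`, with `e ∈ P₁`, the smallest edge
on `P₁ ++ P₂` lies on `P₁`. -/
def ExtActive [LinearOrder E] (src tgt : E → V) (T : Finset E) (e : E) : Prop :=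
  e ∉ T ∧ ∃ (u : V) (p₁ p₂ : List E),
    (∀ f ∈ p₁, f ∈ T ∨ f = e) ∧ (∀ f ∈ p₂, f ∈ T ∨ f = e) ∧
    IsPath src tgt p₁ u (tgt e) ∧ IsPath src tgt p₂ u (tgt e) ∧
    e ∈ p₁ ∧ (∀ f ∈ p₁, f ∉ p₂) ∧
    ∃ fmin ∈ p₁, ∀ f ∈ p₁ ++ p₂, fmin ≤ f

/-- The external activity `e(T)` of an arborescence `T`. -/
noncomputable def extActivity [LinearOrder E] (src tgt : E → V) (T : Finset E) : ℕ :=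
  Nat.card {e : E // ExtActive src tgt T e}

/-- The greedoid Tutte polynomial `T(G,s;y) = Σ_{T ∈ A(G,s)} y^{e(T)}`. -/
noncomputable def greedoidTutte [LinearOrder E] (src tgt : E → V) (s : V) : Polynomial ℤ :=
  ∑ᶠ T : {T : Finset E // IsArborescence src tgt s T}, X ^ extActivity src tgt T.1

/-- `f` is a `G^r`-parking function rooted at `s`. -/
def IsParking (src tgt : E → V) (s : V) (f : {v : V // v ≠ s} → ℕ) : Prop :=
  ∀ A : Finset {v : V // v ≠ s}, A.Nonempty →
    ∃ v ∈ A, f v < Nat.card {e : E // (∀ w ∈ A, src e ≠ w.1) ∧ tgt e = v.1}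

/-- The d-level of a `G^r`-parking function: `|E| − |V| + 1 − Σ_{v≠s} f(v)`. -/
noncomputable def parkDlvl (src : E → V) (s : V) (f : {v : V // v ≠ s} → ℕ) : ℕ :=
  ((Fintype.card E : ℤ) - Fintype.card V + 1 - ∑ v : {v : V // v ≠ s}, (f v : ℤ)).toNat

/-- `σ` is an s-decreasing traversal: a sequence in which every vertex and edge of `G`
appears exactly once, satisfying (R1) every vertex other than `s` is immediately
preceded by an edge targeting it, and (R2) every edge is the `<ₑ`-maximum edge not yet
seen whose source has been seen. -/
def IsTraversal [LinearOrder E] (src tgt : E → V) (s : V) (σ : List (V ⊕ E)) : Prop :=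
  σ.Nodup ∧ (∀ x : V ⊕ E, x ∈ σ) ∧
  (∀ (i : ℕ) (hi : i < σ.length) (v : V),
      σ.get ⟨i, hi⟩ = Sum.inl v → v ≠ s →
      0 < i ∧ ∃ e : E, tgt e = v ∧ σ.get ⟨i - 1, by omega⟩ = Sum.inr e) ∧
  (∀ (i : ℕ) (hi : i < σ.length) (e : E),
      σ.get ⟨i, hi⟩ = Sum.inr e →
      Sum.inl (src e) ∈ σ.take i ∧
      ∀ f : E, Sum.inr f ∉ σ.take i → Sum.inl (src f) ∈ σ.take i → f ≤ e)

open scoped Classical in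
/-- `Υ(σ)`: the set of edges immediately preceding a non-sink vertex in `σ`. -/
noncomputable def Upsilon (src tgt : E → V) (s : V) (σ : List (V ⊕ E)) : Finset E :=
  Finset.univ.filter fun e =>
    ∃ (i : ℕ) (hi : i < σ.length) (v : V), v ≠ s ∧ σ.get ⟨i, hi⟩ = Sum.inl v ∧
      0 < i ∧ ∃ hj : i - 1 < σ.length, σ.get ⟨i - 1, hj⟩ = Sum.inr e

/-- The strength of `σ`: the number of strong edges, i.e. edges whose target appears
before them in `σ`. -/
noncomputable def strength (tgt : E → V) (σ : List (V ⊕ E)) : ℕ :=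
  Nat.card {e : E // ∃ (i : ℕ) (hi : i < σ.length),
    σ.get ⟨i, hi⟩ = Sum.inr e ∧ Sum.inl (tgt e) ∈ σ.take i}

/-- `Ψ(σ)(v)`: one less than the number of edges targeting `v` that appear before the
vertex `v` in `σ`. -/
def Psi (tgt : E → V) (s : V) (σ : List (V ⊕ E)) : {v : V // v ≠ s} → ℕ :=
  fun v =>
    (((σ.takeWhile fun x => x ≠ Sum.inl v.1).filterMap Sum.getRight?).filter
      fun e => tgt e = v.1).length - 1


section Helpers

set_option linter.unusedSectionVars false

/-! ### Abstract rewriting -/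

theorem joinOfDiamond {α : Type} {r : α → α → Prop}
    (hd : ∀ a b c, r a b → r a c → b = c ∨ ∃ d, r b d ∧ r c d) {a b c : α}
    (hab : Relation.ReflTransGen r a b) (hac : Relation.ReflTransGen r a c) :
    Relation.Join (Relation.ReflTransGen r) b c := by
  refine Relation.church_rosser ?_ hab hac
  intro a b c h1 h2
  rcases hd a b c h1 h2 with rfl | ⟨d, h3, h4⟩
  · exact ⟨b, Relation.ReflGen.refl, Relation.ReflTransGen.refl⟩
  · exact ⟨d, Relation.ReflGen.single h3, Relation.ReflTransGen.single h4⟩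

/-- `a` reduces in `k` steps to an irreducible element. -/
def NfIn {α : Type} (r : α → α → Prop) : ℕ → α → Prop
  | 0, a => ∀ b, ¬ r a b
  | k + 1, a => ∃ b, r a b ∧ NfIn r k b

theorem nfIn_step {α : Type} {r : α → α → Prop}
    (hd : ∀ a b c, r a b → r a c → b = c ∨ ∃ d, r b d ∧ r c d) :
    ∀ (k : ℕ) (a b : α), NfIn r k a → r a b → ∃ k', k = k' + 1 ∧ NfIn r k' b := by
  intro k
  induction k with
  | zero => intro a b h hr; exact absurd hr (h b)
  | succ k ih =>
    rintro a b ⟨c, hac, hc⟩ hab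
    refine ⟨k, rfl, ?_⟩
    rcases hd a b c hab hac with rfl | ⟨d, h1, h2⟩
    · exact hc
    · obtain ⟨k', rfl, hd'⟩ := ih c d hc h2
      exact ⟨d, h1, hd'⟩

theorem nfIn_trans {α : Type} {r : α → α → Prop}
    (hd : ∀ a b c, r a b → r a c → b = c ∨ ∃ d, r b d ∧ r c d)
    {k : ℕ} {a b : α} (h : NfIn r k a) (hr : Relation.TransGen r a b) :
    ∃ k', k' < k ∧ NfIn r k' b := by
  induction hr with
  | single h1 =>
    obtain ⟨k', rfl, h2⟩ := nfIn_step hd _ _ _ h h1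
    exact ⟨k', by omega, h2⟩
  | tail _ h1 ih =>
    obtain ⟨k', hk, h2⟩ := ih
    obtain ⟨k'', rfl, h3⟩ := nfIn_step hd _ _ _ h2 h1
    exact ⟨k'', by omega, h3⟩

theorem nfIn_of_reach {α : Type} {r : α → α → Prop} {a b : α}
    (h : Relation.ReflTransGen r a b) (hb : ∀ c, ¬ r b c) : ∃ k, NfIn r k a := by
  induction h using Relation.ReflTransGen.head_induction_on with
  | refl => exact ⟨0, hb⟩
  | head h1 _ ih => obtain ⟨k, hk⟩ := ih; exact ⟨k + 1, _, h1, hk⟩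

theorem not_cycle_of_nf {α : Type} {r : α → α → Prop}
    (hd : ∀ a b c, r a b → r a c → b = c ∨ ∃ d, r b d ∧ r c d) {a b : α}
    (h : Relation.ReflTransGen r a b) (hb : ∀ c, ¬ r b c) : ¬ Relation.TransGen r a a := by
  intro hc
  obtain ⟨k, hk⟩ := nfIn_of_reach h hb
  induction k using Nat.strong_induction_on with
  | _ k ih =>
    obtain ⟨k', hlt, hk'⟩ := nfIn_trans hd hk hc
    exact ih k' hlt hk'

variable (src tgt : E → V)

/-! ### Firing -/

theorem fire_spec {c : V → ℕ} {v : V} (h : outdeg src v ≤ c v) (w : V) :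
    fire src tgt c v w + (if w = v then outdeg src v else 0) = c w + numEdges src tgt v w := by
  unfold fire
  split_ifs with hw
  · subst hw; omega
  · omega

theorem sfire_spec {s : V} {c : {v : V // v ≠ s} → ℕ} {v : {v : V // v ≠ s}}
    (h : outdeg src v.1 ≤ c v) (w : {v : V // v ≠ s}) :
    sfire src tgt s c v w + (if w = v then outdeg src v.1 else 0)
      = c w + numEdges src tgt v.1 w.1 := by
  unfold sfire
  split_ifs with hw
  · subst hw; omega
  · omega

theorem fire_diamond (a b c : V → ℕ) (h1 : FireStep src tgt a b) (h2 : FireStep src tgt a c) :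
    b = c ∨ ∃ d, FireStep src tgt b d ∧ FireStep src tgt c d := by
  obtain ⟨v, hv, rfl⟩ := h1
  obtain ⟨w, hw, rfl⟩ := h2
  by_cases hvw : v = w
  · subst hvw; exact Or.inl rfl
  right
  have hv1 : outdeg src v ≤ fire src tgt a w v := by
    have := fire_spec src tgt hw v
    rw [if_neg hvw] at this; omega
  have hw1 : outdeg src w ≤ fire src tgt a v w := by
    have := fire_spec src tgt hv w
    rw [if_neg (Ne.symm hvw)] at this; omega
  refine ⟨_, ⟨w, hw1, rfl⟩, ⟨v, hv1, ?_⟩⟩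
  funext x
  have e1 := fire_spec src tgt hv x
  have e2 := fire_spec src tgt hw x
  have e3 := fire_spec src tgt hv1 x
  have e4 := fire_spec src tgt hw1 x
  omega

theorem sfire_diamond (s : V) (a b c : {v : V // v ≠ s} → ℕ)
    (h1 : SFireStep src tgt s a b) (h2 : SFireStep src tgt s a c) :
    b = c ∨ ∃ d, SFireStep src tgt s b d ∧ SFireStep src tgt s c d := by
  obtain ⟨v, hv, rfl⟩ := h1
  obtain ⟨w, hw, rfl⟩ := h2
  by_cases hvw : v = w
  · subst hvw; exact Or.inl rfl
  right
  have hv1 : outdeg src v.1 ≤ sfire src tgt s a w v := by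
    have := sfire_spec src tgt hw v
    rw [if_neg hvw] at this; omega
  have hw1 : outdeg src w.1 ≤ sfire src tgt s a v w := by
    have := sfire_spec src tgt hv w
    rw [if_neg (Ne.symm hvw)] at this; omega
  refine ⟨_, ⟨w, hw1, rfl⟩, ⟨v, hv1, ?_⟩⟩
  funext x
  have e1 := sfire_spec src tgt hv x
  have e2 := sfire_spec src tgt hw x
  have e3 := sfire_spec src tgt hv1 x
  have e4 := sfire_spec src tgt hw1 x
  omega

theorem sum_numEdges_mul (v : V) (f : V → ℕ) :
    ∑ w, numEdges src tgt v w * f w = ∑ e with src e = v, f (tgt e) := by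
  have : ∀ w, numEdges src tgt v w * f w
      = ∑ e with src e = v ∧ tgt e = w, f (tgt e) := by
    intro w
    rw [Finset.sum_congr rfl (g := fun _ => f w)]
    · simp [numEdges]
    · intro e he
      simp only [Finset.mem_filter] at he
      rw [he.2.2]
  simp_rw [this]
  simp_rw [← Finset.filter_filter]
  exact Finset.sum_fiberwise _ _ _

theorem sum_numEdges (v : V) : ∑ w, numEdges src tgt v w = outdeg src v := by
  have := sum_numEdges_mul src tgt v (fun _ => 1)
  simpa [outdeg] using this

theorem lvl_fire {c : V → ℕ} {v : V} (h : outdeg src v ≤ c v) :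
    lvl (fire src tgt c v) = lvl c := by
  have h1 : ∑ w, (fire src tgt c v w + (if w = v then outdeg src v else 0))
      = ∑ w, (c w + numEdges src tgt v w) :=
    Finset.sum_congr rfl fun w _ => fire_spec src tgt h w
  rw [Finset.sum_add_distrib, Finset.sum_add_distrib, sum_numEdges] at h1
  simp at h1
  simpa [lvl] using h1

theorem lvl_reach {c d : V → ℕ} (h : Reach src tgt c d) : lvl d = lvl c := by
  induction h with
  | refl => rfl
  | tail _ h1 ih =>
    obtain ⟨v, hv, rfl⟩ := h1
    rw [lvl_fire src tgt hv, ih]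

theorem stable_irred {c : V → ℕ} (h : Stable src c) (d : V → ℕ) : ¬ FireStep src tgt c d := by
  rintro ⟨v, hv, -⟩
  exact absurd (h v) (by omega)

theorem sstable_irred {s : V} {c : {v : V // v ≠ s} → ℕ} (h : SStable src s c)
    (d : {v : V // v ≠ s} → ℕ) : ¬ SFireStep src tgt s c d := by
  rintro ⟨v, hv, -⟩
  exact absurd (h v) (by omega)

theorem sreach_add {s : V} {c d : {v : V // v ≠ s} → ℕ} (h : SReach src tgt s c d)
    (x : {v : V // v ≠ s} → ℕ) : SReach src tgt s (c + x) (d + x) := by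
  induction h with
  | refl => exact Relation.ReflTransGen.refl
  | @tail d e _ h1 ih =>
    refine ih.tail ?_
    obtain ⟨v, hv, rfl⟩ := h1
    have hv' : outdeg src v.1 ≤ (d + x) v := by simp only [Pi.add_apply]; omega
    refine ⟨v, hv', ?_⟩
    funext w
    have e1 := sfire_spec src tgt hv w
    have e2 := sfire_spec src tgt hv' w
    simp only [Pi.add_apply] at e2 ⊢
    omega

/-! ### Termination -/

/-- `v` has a walk of length `n` to `s`. -/
def StepsTo (s : V) : ℕ → V → Prop
  | 0, v => v = s
  | n + 1, v => ∃ e, src e = v ∧ StepsTo s n (tgt e)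

theorem exists_dist (hG : StronglyConnected src tgt) (s : V) :
    ∃ d : V → ℕ, ∀ v, v ≠ s → ∃ e, src e = v ∧ d (tgt e) < d v := by
  classical
  have hex : ∀ v, ∃ n, StepsTo src tgt s n v := by
    intro v
    have h := hG v s
    induction h using Relation.ReflTransGen.head_induction_on with
    | refl => exact ⟨0, rfl⟩
    | head h1 _ ih =>
      obtain ⟨e, he1, he2⟩ := h1
      obtain ⟨n, hn⟩ := ih
      exact ⟨n + 1, e, he1, by rw [he2]; exact hn⟩
  refine ⟨fun v => Nat.find (hex v), ?_⟩
  intro v hv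
  have h1 := Nat.find_spec (hex v)
  rcases hn : Nat.find (hex v) with _ | n
  · rw [hn] at h1; exact absurd h1 hv
  · rw [hn] at h1
    obtain ⟨e, he1, he2⟩ := h1
    refine ⟨e, he1, ?_⟩
    have : Nat.find (hex (tgt e)) ≤ n := Nat.find_min' _ he2
    simp only [hn]
    omega

theorem exists_weight (hG : StronglyConnected src tgt) (s : V) :
    ∃ h : V → ℕ, ∀ v, v ≠ s → ∑ w, numEdges src tgt v w * h w < outdeg src v * h v := by
  obtain ⟨d, hd⟩ := exists_dist src tgt hG s
  set M := Fintype.card E + 1 with hM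
  set D := ∑ v, d v with hD
  have hdD : ∀ v, d v ≤ D := fun v =>
    Finset.single_le_sum (f := d) (fun _ _ => Nat.zero_le _) (Finset.mem_univ v)
  have hg : ∀ v, M ^ (D - d v) ≤ M ^ D := fun v =>
    Nat.pow_le_pow_right (by omega) (Nat.sub_le _ _)
  refine ⟨fun v => M ^ D - M ^ (D - d v), ?_⟩
  intro v hv
  rw [sum_numEdges_mul]
  obtain ⟨e, he, hlt⟩ := hd v hv
  have hcard : outdeg src v ≤ Fintype.card E := Finset.card_le_univ _
  have hsum : ∑ e with src e = v, (M ^ D - M ^ (D - d (tgt e)))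
      + ∑ e with src e = v, M ^ (D - d (tgt e)) = outdeg src v * M ^ D := by
    rw [← Finset.sum_add_distrib, Finset.sum_congr rfl (g := fun _ => M ^ D)]
    · simp [outdeg]
    · intro e _
      exact Nat.sub_add_cancel (hg _)
  have hsing : M ^ (D - d (tgt e)) ≤ ∑ e with src e = v, M ^ (D - d (tgt e)) :=
    Finset.single_le_sum (f := fun e => M ^ (D - d (tgt e))) (fun _ _ => Nat.zero_le _)
      (by simp [he])
  have hpow : M * M ^ (D - d v) ≤ M ^ (D - d (tgt e)) := by
    rw [← pow_succ']
    have := hdD v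
    exact Nat.pow_le_pow_right (by omega) (by omega)
  have hpos : 0 < M ^ (D - d v) := Nat.pow_pos (by omega)
  have hlt2 : outdeg src v * M ^ (D - d v) < M * M ^ (D - d v) :=
    Nat.mul_lt_mul_of_pos_right (by omega) hpos
  have hsub : outdeg src v * (M ^ D - M ^ (D - d v)) + outdeg src v * M ^ (D - d v)
      = outdeg src v * M ^ D := by
    rw [← Nat.mul_add, Nat.sub_add_cancel (hg v)]
  simp only
  omega

theorem exists_stab (hG : StronglyConnected src tgt) (s : V) (c : {v : V // v ≠ s} → ℕ) :
    ∃ d, SReach src tgt s c d ∧ SStable src s d := by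
  obtain ⟨h, hh⟩ := exists_weight src tgt hG s
  induction hn : ∑ v, c v * h v.1 using Nat.strong_induction_on generalizing c with
  | _ n ih =>
    by_cases hs : SStable src s c
    · exact ⟨c, Relation.ReflTransGen.refl, hs⟩
    · simp only [SStable, not_forall, not_lt] at hs
      obtain ⟨v, hv⟩ := hs
      have hsum : ∑ w, (sfire src tgt s c v w + (if w = v then outdeg src v.1 else 0)) * h w.1
          = ∑ w : {v : V // v ≠ s}, (c w + numEdges src tgt v.1 w.1) * h w.1 :=
        Finset.sum_congr rfl fun w _ => by rw [sfire_spec src tgt hv w]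
      simp only [add_mul, Finset.sum_add_distrib, ite_mul, zero_mul, Finset.sum_ite_eq',
        Finset.mem_univ, if_true] at hsum
      have hle : ∑ w : {v : V // v ≠ s}, numEdges src tgt v.1 w.1 * h w.1
          ≤ ∑ w, numEdges src tgt v.1 w * h w := by
        rw [Fintype.sum_eq_add_sum_subtype_ne (fun w => numEdges src tgt v.1 w * h w) s]
        omega
      have := hh v.1 v.2
      obtain ⟨d, hd1, hd2⟩ := ih _ (by omega) (sfire src tgt s c v) rfl
      exact ⟨d, Relation.ReflTransGen.head ⟨v, hv, rfl⟩ hd1, hd2⟩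

/-! ### Stabilization -/

theorem stab_spec (hG : StronglyConnected src tgt) (s : V) (c : {v : V // v ≠ s} → ℕ) :
    SReach src tgt s c (stab src tgt s c) ∧ SStable src s (stab src tgt s c) :=
  Classical.epsilon_spec (exists_stab src tgt hG s c)

theorem sreach_stable_eq {s : V} {c d : {v : V // v ≠ s} → ℕ} (hc : SStable src s c)
    (h : SReach src tgt s c d) : d = c := by
  rcases Relation.ReflTransGen.cases_head h with h | ⟨x, hx, -⟩
  · exact h.symm
  · exact absurd hx (sstable_irred src tgt hc x)

theorem stab_congr (hG : StronglyConnected src tgt) {s : V} {c d : {v : V // v ≠ s} → ℕ}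
    (h : SReach src tgt s c d) : stab src tgt s d = stab src tgt s c := by
  have h1 := stab_spec src tgt hG s c
  have h2 := stab_spec src tgt hG s d
  obtain ⟨x, hx1, hx2⟩ := joinOfDiamond (sfire_diamond src tgt s) h1.1 (h.trans h2.1)
  rw [← sreach_stable_eq src tgt h1.2 hx1, ← sreach_stable_eq src tgt h2.2 hx2]

theorem stab_stable (hG : StronglyConnected src tgt) {s : V} {c : {v : V // v ≠ s} → ℕ}
    (h : SStable src s c) : stab src tgt s c = c :=
  sreach_stable_eq src tgt h (stab_spec src tgt hG s c).1

theorem stab_add (hG : StronglyConnected src tgt) (s : V) (c x : {v : V // v ≠ s} → ℕ) :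
    stab src tgt s (stab src tgt s c + x) = stab src tgt s (c + x) :=
  stab_congr src tgt hG (sreach_add src tgt (stab_spec src tgt hG s c).1 x)

theorem srec_stable (hG : StronglyConnected src tgt) {s : V} {c : {v : V // v ≠ s} → ℕ}
    (h : SRecurrent src tgt s c) : SStable src s c := by
  obtain ⟨c₂, rfl⟩ := h 0
  exact (stab_spec src tgt hG s _).2

theorem finite_stable (s : V) : {c : {v : V // v ≠ s} → ℕ | SStable src s c}.Finite :=
  (Set.finite_Iic (fun v : {v : V // v ≠ s} => outdeg src v.1)).subset
    fun _ hc v => (hc v).le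

theorem finite_recS (hG : StronglyConnected src tgt) (s : V) : Finite (RecS src tgt s) :=
  ((finite_stable src s).subset fun _ hc => srec_stable src tgt hG hc).to_subtype

/-- Pigeonhole: the stabilizations of multiples of `β_s` are eventually periodic. -/
theorem exists_period (hG : StronglyConnected src tgt) (s : V) :
    ∃ i m : ℕ, 0 < m ∧ stab src tgt s ((i + m) • betaS src tgt s)
      = stab src tgt s (i • betaS src tgt s) := by
  have := (finite_stable src s).to_subtype
  obtain ⟨i, j, hij, h⟩ := Finite.exists_ne_map_eq_of_infinite
    (fun k : ℕ => (⟨stab src tgt s (k • betaS src tgt s), (stab_spec src tgt hG s _).2⟩ :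
      {c : {v : V // v ≠ s} → ℕ | SStable src s c}))
  simp only [Subtype.mk.injEq] at h
  rcases lt_or_gt_of_ne hij with hlt | hlt
  · exact ⟨i, j - i, by omega, by rw [Nat.add_sub_cancel' hlt.le]; exact h.symm⟩
  · exact ⟨j, i - j, by omega, by rw [Nat.add_sub_cancel' hlt.le]; exact h⟩

theorem srec_period (hG : StronglyConnected src tgt) {s : V} {c : {v : V // v ≠ s} → ℕ}
    (h : SRecurrent src tgt s c) :
    ∃ m, 0 < m ∧ stab src tgt s (c + m • betaS src tgt s) = c := by
  obtain ⟨i, m, hm, him⟩ := exists_period src tgt hG s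
  refine ⟨m, hm, ?_⟩
  obtain ⟨c₂, rfl⟩ := h (i • betaS src tgt s)
  rw [stab_add src tgt hG]
  have e : i • betaS src tgt s + c₂ + m • betaS src tgt s
      = (i + m) • betaS src tgt s + c₂ := by rw [add_smul]; abel
  rw [e, ← stab_add src tgt hG, him, stab_add src tgt hG]

theorem srec_add (hG : StronglyConnected src tgt) {s : V} {c : {v : V // v ≠ s} → ℕ}
    (h : SRecurrent src tgt s c) (x : {v : V // v ≠ s} → ℕ) :
    SRecurrent src tgt s (stab src tgt s (c + x)) := by
  intro c₁
  obtain ⟨c₂, hc⟩ := h c₁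
  refine ⟨c₂ + x, ?_⟩
  rw [← add_assoc, ← stab_add src tgt hG, hc]

/-- Configurations that are dominated by something reachable from a multiple of `β_s`. -/
def spread (s : V) : AddSubmonoid ({v : V // v ≠ s} → ℕ) where
  carrier := {c | ∃ (K : ℕ) (y : _), SReach src tgt s (K • betaS src tgt s) y ∧ c ≤ y}
  zero_mem' := ⟨0, _, Relation.ReflTransGen.refl, by simp⟩
  add_mem' := by
    rintro a b ⟨K, y, hy, ha⟩ ⟨L, z, hz, hb⟩
    refine ⟨K + L, y + z, ?_, add_le_add ha hb⟩
    rw [add_smul]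
    have h1 := sreach_add src tgt hy (L • betaS src tgt s)
    have h2 := sreach_add src tgt hz y
    rw [add_comm _ y, add_comm _ y] at h2
    exact h1.trans h2

theorem single_le_iff' {ι : Type} [DecidableEq ι] (i : ι) (f : ι → ℕ) :
    Pi.single i 1 ≤ f ↔ 1 ≤ f i := by
  constructor
  · intro h
    simpa using h i
  · intro h j
    by_cases hj : j = i
    · subst hj; simpa using h
    · simp [hj]

theorem spread_single (hG : StronglyConnected src tgt) (s v : V) :
    ∀ hv : v ≠ s, Pi.single ⟨v, hv⟩ 1 ∈ spread src tgt s := by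
  have h := hG s v
  induction h with
  | refl => intro hv; exact absurd rfl hv
  | @tail u v _ h1 ih =>
    intro hv
    obtain ⟨e, he1, he2⟩ := h1
    have hA : 1 ≤ numEdges src tgt u v :=
      Finset.card_pos.mpr ⟨e, by simp [he1, he2]⟩
    by_cases hu : u = s
    · refine ⟨1, _, Relation.ReflTransGen.refl, ?_⟩
      rw [single_le_iff']
      subst hu
      simpa [betaS] using hA
    · have h2 := nsmul_mem (ih hu) (outdeg src u)
      obtain ⟨K, y, hy, hle⟩ := h2
      have hle' := hle ⟨u, hu⟩
      simp only [Pi.smul_apply, Pi.single_eq_same, smul_eq_mul, mul_one] at hle'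
      by_cases huv : u = v
      · subst huv
        exact ih hv
      · refine ⟨K, _, hy.tail ⟨⟨u, hu⟩, hle', rfl⟩, ?_⟩
        rw [single_le_iff']
        have := sfire_spec src tgt (v := ⟨u, hu⟩) hle' ⟨v, hv⟩
        rw [if_neg (by simpa using Ne.symm huv)] at this
        simp only at this
        omega

theorem spread_all (hG : StronglyConnected src tgt) (s : V) (c : {v : V // v ≠ s} → ℕ) :
    c ∈ spread src tgt s := by
  have h : c = ∑ v, c v • Pi.single v 1 := by
    funext w
    simp [Finset.sum_apply, Pi.single_apply]
  rw [h]
  exact sum_mem fun v _ => nsmul_mem (spread_single src tgt hG s v.1 v.2) _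

theorem exists_srec (hG : StronglyConnected src tgt) (s : V) (x : {v : V // v ≠ s} → ℕ) :
    ∃ k : ℕ, SRecurrent src tgt s (stab src tgt s (x + k • betaS src tgt s)) := by
  obtain ⟨i, m, hm, him⟩ := exists_period src tgt hG s
  refine ⟨i, ?_⟩
  have hper : ∀ t : ℕ, stab src tgt s (x + (i + t * m) • betaS src tgt s)
      = stab src tgt s (x + i • betaS src tgt s) := by
    intro t
    induction t with
    | zero => simp
    | succ t ih =>
      have e : x + (i + (t + 1) * m) • betaS src tgt s
          = (i + m) • betaS src tgt s + (x + (t * m) • betaS src tgt s) := by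
        rw [add_mul, one_mul, add_smul, add_smul, add_smul]; abel
      rw [e, ← stab_add src tgt hG, him, stab_add src tgt hG, ← ih]
      congr 1
      rw [add_smul]; abel
  intro c₁
  obtain ⟨K, y, hy, hle⟩ := spread_all src tgt hG s c₁
  have hK : K ≤ i + K * m := by nlinarith
  refine ⟨(y - c₁) + (x + (i + K * m - K) • betaS src tgt s), ?_⟩
  rw [← hper K, ← add_assoc, add_tsub_cancel_of_le hle]
  have e : x + (i + K * m) • betaS src tgt s
      = K • betaS src tgt s + (x + (i + K * m - K) • betaS src tgt s) := by
    conv_lhs => rw [← Nat.add_sub_cancel' hK, add_smul]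
    abel
  rw [e]
  exact stab_congr src tgt hG (sreach_add src tgt hy _)

/-! ### The relation `~_s` -/

theorem sequiv_equivalence (hG : StronglyConnected src tgt) (s : V) :
    Equivalence (fun a b : RecS src tgt s => SEquiv src tgt s a.1 b.1) where
  refl a := ⟨0, by rw [zero_smul, add_zero]; exact stab_stable src tgt hG (srec_stable src tgt hG a.2)⟩
  symm := by
    rintro a b ⟨k, hk⟩
    obtain ⟨m, hm, ham⟩ := srec_period src tgt hG a.2
    have hper : ∀ t : ℕ, stab src tgt s (a.1 + (t * m) • betaS src tgt s) = a.1 := by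
      intro t
      induction t with
      | zero => rw [zero_mul, zero_smul, add_zero]
                exact stab_stable src tgt hG (srec_stable src tgt hG a.2)
      | succ t ih =>
        rw [add_mul, one_mul, add_smul, ← add_assoc, ← stab_add src tgt hG, ih, ham]
    have hK : k ≤ k * m := by nlinarith
    refine ⟨k * m - k, ?_⟩
    rw [← hk, stab_add src tgt hG, add_assoc, ← add_smul, Nat.add_sub_cancel' hK, hper]
  trans := by
    rintro a b c ⟨k, hk⟩ ⟨l, hl⟩
    refine ⟨k + l, ?_⟩
    rw [add_smul, ← add_assoc, ← stab_add src tgt hG, hk, hl]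

theorem mk_eq_iff (hG : StronglyConnected src tgt) (s : V) (a b : RecS src tgt s) :
    Quotient.mk (recSSetoid src tgt s) a = Quotient.mk (recSSetoid src tgt s) b
      ↔ SEquiv src tgt s a.1 b.1 := by
  rw [Quotient.eq]
  exact (sequiv_equivalence src tgt hG s).eqvGen_iff

theorem dlvl_le_class (hG : StronglyConnected src tgt) {s : V} {n : ℕ} (a : RecS src tgt s) :
    dlvlClass src tgt s (Quotient.mk _ a) ≤ n ↔
      ∀ k : ℕ, dlvl src s (stab src tgt s (a.1 + k • betaS src tgt s)) ≤ n := by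
  have := finite_recS src tgt hG s
  constructor
  · intro h k
    refine le_trans ?_ h
    refine le_csSup (Set.toFinite _).bddAbove ?_
    refine ⟨⟨_, srec_add src tgt hG a.2 (k • betaS src tgt s)⟩, ?_, rfl⟩
    exact ((mk_eq_iff src tgt hG s _ _).2 ⟨k, rfl⟩).symm
  · intro h
    refine csSup_le ⟨_, a, rfl, rfl⟩ ?_
    rintro _ ⟨b, hb, rfl⟩
    obtain ⟨k, hk⟩ := (mk_eq_iff src tgt hG s _ _).1 (Eq.symm hb)
    simp only
    rw [← hk]
    exact h k

/-! ### Lifting to the sinkless model -/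

theorem lvl_split (s : V) (c : V → ℕ) : lvl c = c s + ∑ v : {v : V // v ≠ s}, restrictS s c v := by
  unfold lvl restrictS
  exact Fintype.sum_eq_add_sum_subtype_ne c s

theorem config_ext {s : V} {c d : V → ℕ} (h1 : restrictS s c = restrictS s d)
    (h2 : lvl c = lvl d) : c = d := by
  rw [lvl_split s c, lvl_split s d, h1] at h2
  funext v
  by_cases hv : v = s
  · subst hv; omega
  · exact congrFun h1 ⟨v, hv⟩

/-- The level-`n` chip configuration that restricts to `c`. -/
def lift (s : V) (n : ℕ) (c : {v : V // v ≠ s} → ℕ) : V → ℕ :=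
  fun v => if h : v = s then n - ∑ w, c w else c ⟨v, h⟩

theorem lift_s (s : V) (n : ℕ) (c : {v : V // v ≠ s} → ℕ) :
    lift s n c s = n - ∑ w : {v : V // v ≠ s}, c w := dif_pos rfl

theorem restrict_lift (s : V) (n : ℕ) (c : {v : V // v ≠ s} → ℕ) :
    restrictS s (lift s n c) = c := by
  funext v
  simp [restrictS, lift, v.2]

theorem lvl_lift {s : V} {n : ℕ} {c : {v : V // v ≠ s} → ℕ} (h : dlvl src s c ≤ n) :
    lvl (lift s n c) = n := by
  rw [lvl_split s, restrict_lift, lift_s]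
  unfold dlvl at h
  omega

theorem restrict_fire_ne {s : V} {c : V → ℕ} (v : {v : V // v ≠ s}) :
    restrictS s (fire src tgt c v.1) = sfire src tgt s (restrictS s c) v := by
  funext w
  simp [restrictS, fire, sfire, Subtype.ext_iff]

theorem restrict_fire_s (s : V) (c : V → ℕ) :
    restrictS s (fire src tgt c s) = restrictS s c + betaS src tgt s := by
  funext w
  simp [restrictS, fire, betaS, w.2]

theorem reach_of_sreach {s : V} {c : V → ℕ} {d : {v : V // v ≠ s} → ℕ}
    (h : SReach src tgt s (restrictS s c) d) :
    ∃ c', Reach src tgt c c' ∧ restrictS s c' = d := by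
  induction h with
  | refl => exact ⟨c, Relation.ReflTransGen.refl, rfl⟩
  | tail _ h1 ih =>
    obtain ⟨c', hc, rfl⟩ := ih
    obtain ⟨v, hv, rfl⟩ := h1
    exact ⟨_, hc.tail ⟨v.1, hv, rfl⟩, restrict_fire_ne src tgt v⟩

theorem sreach_of_reach {s : V} {c d : V → ℕ} (h : Reach src tgt c d) :
    ∃ k : ℕ, SReach src tgt s (restrictS s c + k • betaS src tgt s) (restrictS s d) := by
  induction h with
  | refl => exact ⟨0, by rw [zero_smul, add_zero]; exact Relation.ReflTransGen.refl⟩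
  | tail _ h1 ih =>
    obtain ⟨k, hk⟩ := ih
    obtain ⟨v, hv, rfl⟩ := h1
    by_cases hvs : v = s
    · subst hvs
      refine ⟨k + 1, ?_⟩
      rw [restrict_fire_s, add_smul, one_smul, ← add_assoc]
      exact sreach_add src tgt hk _
    · refine ⟨k, ?_⟩
      rw [restrict_fire_ne src tgt (⟨v, hvs⟩ : {v : V // v ≠ s})]
      exact hk.tail ⟨⟨v, hvs⟩, hv, rfl⟩

theorem lift_step (hG : StronglyConnected src tgt) {s : V} {n : ℕ} {c : {v : V // v ≠ s} → ℕ}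
    (h1 : dlvl src s c ≤ n)
    (h2 : dlvl src s (stab src tgt s (c + betaS src tgt s)) ≤ n) :
    Relation.TransGen (FireStep src tgt) (lift s n c)
      (lift s n (stab src tgt s (c + betaS src tgt s))) := by
  have hs : outdeg src s ≤ lift s n c s := by
    unfold dlvl at h1
    rw [lift_s]
    omega
  have hr : restrictS s (fire src tgt (lift s n c) s) = c + betaS src tgt s := by
    rw [restrict_fire_s, restrict_lift]
  have h3 := (stab_spec src tgt hG s (c + betaS src tgt s)).1
  rw [← hr] at h3
  obtain ⟨c', hc, hc'⟩ := reach_of_sreach src tgt h3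
  have : c' = lift s n (stab src tgt s (c + betaS src tgt s)) := by
    refine config_ext (s := s) ?_ ?_
    · rw [hc', restrict_lift, hr]
    · rw [lvl_lift src h2, lvl_reach src tgt hc, lvl_fire src tgt hs, lvl_lift src h1]
  rw [← this]
  exact Relation.TransGen.head' ⟨s, hs, rfl⟩ hc

theorem stab_succ (hG : StronglyConnected src tgt) (s : V) (c : {v : V // v ≠ s} → ℕ) (k : ℕ) :
    stab src tgt s (stab src tgt s (c + k • betaS src tgt s) + betaS src tgt s)
      = stab src tgt s (c + (k + 1) • betaS src tgt s) := by
  rw [stab_add src tgt hG, add_smul, one_smul, add_assoc]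

theorem lift_iter (hG : StronglyConnected src tgt) {s : V} {n : ℕ} (a : RecS src tgt s)
    (h : dlvlClass src tgt s (Quotient.mk _ a) ≤ n) (k : ℕ) :
    Relation.TransGen (FireStep src tgt) (lift s n a.1)
      (lift s n (stab src tgt s (a.1 + (k + 1) • betaS src tgt s))) := by
  rw [dlvl_le_class src tgt hG] at h
  have h0 : stab src tgt s (a.1 + 0 • betaS src tgt s) = a.1 := by
    rw [zero_smul, add_zero]; exact stab_stable src tgt hG (srec_stable src tgt hG a.2)
  induction k with
  | zero =>
    have := lift_step src tgt hG (h 0) (by rw [stab_succ src tgt hG]; exact h 1)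
    rwa [stab_succ src tgt hG, h0] at this
  | succ k ih =>
    have := lift_step src tgt hG (h (k + 1)) (by rw [stab_succ src tgt hG]; exact h _)
    rw [stab_succ src tgt hG] at this
    exact ih.trans this

/-- Level-`n` chip configurations from which no stable configuration is accessible. -/
abbrev NonTerm (n : ℕ) :=
  {c : V → ℕ // lvl c = n ∧ ∀ d, Reach src tgt c d → ¬ Stable src d}

/-- Joinability. -/
def joinSetoid (n : ℕ) : Setoid (NonTerm src tgt n) where
  r a b := Relation.Join (Reach src tgt) a.1 b.1
  iseqv :=
    { refl := fun a => ⟨a.1, Relation.ReflTransGen.refl, Relation.ReflTransGen.refl⟩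
      symm := fun ⟨x, h1, h2⟩ => ⟨x, h2, h1⟩
      trans := by
        rintro a b c ⟨x, h1, h2⟩ ⟨y, h3, h4⟩
        obtain ⟨z, h5, h6⟩ := joinOfDiamond (fire_diamond src tgt) h2 h3
        exact ⟨z, Relation.ReflTransGen.trans h1 h5, Relation.ReflTransGen.trans h4 h6⟩ }

theorem lift_nonTerm (hG : StronglyConnected src tgt) {s : V} {n : ℕ} (a : RecS src tgt s)
    (h : dlvlClass src tgt s (Quotient.mk _ a) ≤ n) :
    lvl (lift s n a.1) = n ∧ ∀ d, Reach src tgt (lift s n a.1) d → ¬ Stable src d := by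
  have h' := (dlvl_le_class src tgt hG a).1 h 0
  rw [zero_smul, add_zero, stab_stable src tgt hG (srec_stable src tgt hG a.2)] at h'
  refine ⟨lvl_lift src h', ?_⟩
  intro d hd hst
  refine not_cycle_of_nf (fire_diamond src tgt) hd (stable_irred src tgt hst) ?_
  obtain ⟨m, hm, hper⟩ := srec_period src tgt hG a.2
  have := lift_iter src tgt hG a h (m - 1)
  rwa [Nat.sub_add_cancel hm, hper] at this

/-- From classes with d-level at most `n` to nonterminating classes of level `n`. -/
noncomputable def toNonTerm (hG : StronglyConnected src tgt) (s : V) (n : ℕ)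
    (q : {q : RecSQuot src tgt s // dlvlClass src tgt s q ≤ n}) :
    Quotient (joinSetoid src tgt n) :=
  Quotient.mk _ ⟨lift s n q.1.out.1, lift_nonTerm src tgt hG q.1.out
    (by rw [Quotient.out_eq]; exact q.2)⟩

theorem toNonTerm_injective (hG : StronglyConnected src tgt) (s : V) (n : ℕ) :
    Function.Injective (toNonTerm src tgt hG s n) := by
  intro p q h
  obtain ⟨x, h1, h2⟩ := Quotient.exact h
  simp only at h1 h2
  obtain ⟨k, hk⟩ := sreach_of_reach src tgt (s := s) h1
  obtain ⟨l, hl⟩ := sreach_of_reach src tgt (s := s) h2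
  rw [restrict_lift] at hk hl
  have e : stab src tgt s (p.1.out.1 + k • betaS src tgt s)
      = stab src tgt s (q.1.out.1 + l • betaS src tgt s) := by
    rw [← stab_congr src tgt hG hk, ← stab_congr src tgt hG hl]
  apply Subtype.ext
  rw [← Quotient.out_eq p.1, ← Quotient.out_eq q.1]
  have hp := (mk_eq_iff src tgt hG s p.1.out
    ⟨_, srec_add src tgt hG p.1.out.2 (k • betaS src tgt s)⟩).2 ⟨k, rfl⟩
  have hq := (mk_eq_iff src tgt hG s q.1.out
    ⟨_, srec_add src tgt hG p.1.out.2 (k • betaS src tgt s)⟩).2 ⟨l, e.symm⟩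
  exact hp.trans hq.symm

theorem toNonTerm_surjective (hG : StronglyConnected src tgt) (s : V) (n : ℕ) :
    Function.Surjective (toNonTerm src tgt hG s n) := by
  intro q
  induction q using Quotient.inductionOn with
  | _ c =>
  obtain ⟨c, hlvl, hc⟩ := c
  -- a reachable configuration that is stable away from `s` is a lift
  have key : ∀ d : V → ℕ, Reach src tgt c d → SStable src s (restrictS s d) →
      dlvl src s (restrictS s d) ≤ n ∧ lift s n (restrictS s d) = d := by
    intro d hd hst
    have hl : lvl d = n := (lvl_reach src tgt hd).trans hlvl
    have hle : dlvl src s (restrictS s d) ≤ n := by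
      have hs : outdeg src s ≤ d s := by
        by_contra hcon
        refine hc d hd ?_
        intro v
        by_cases hv : v = s
        · subst hv; omega
        · exact hst ⟨v, hv⟩
      rw [lvl_split s] at hl
      unfold dlvl
      omega
    exact ⟨hle, config_ext (restrict_lift _ _ _) (by rw [lvl_lift src hle, hl])⟩
  have iter : ∀ k : ℕ, ∃ d, Reach src tgt c d ∧
      restrictS s d = stab src tgt s (restrictS s c + k • betaS src tgt s) := by
    intro k
    induction k with
    | zero =>
      rw [zero_smul, add_zero]
      exact reach_of_sreach src tgt (stab_spec src tgt hG s (restrictS s c)).1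
    | succ k ih =>
      obtain ⟨d, hd, hdk⟩ := ih
      have hst : SStable src s (restrictS s d) := by
        rw [hdk]; exact (stab_spec src tgt hG s _).2
      obtain ⟨hle, hlift⟩ := key d hd hst
      have hs : outdeg src s ≤ d s := by
        have hl : lvl d = n := (lvl_reach src tgt hd).trans hlvl
        rw [lvl_split s] at hl
        unfold dlvl at hle
        omega
      have h3 := (stab_spec src tgt hG s (restrictS s (fire src tgt d s))).1
      obtain ⟨d', hd', hr⟩ := reach_of_sreach src tgt h3
      refine ⟨d', Relation.ReflTransGen.trans (hd.tail ⟨s, hs, rfl⟩) hd', ?_⟩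
      rw [hr, restrict_fire_s, hdk, stab_succ src tgt hG]
  have all : ∀ k : ℕ, dlvl src s (stab src tgt s (restrictS s c + k • betaS src tgt s)) ≤ n ∧
      Reach src tgt c (lift s n (stab src tgt s (restrictS s c + k • betaS src tgt s))) := by
    intro k
    obtain ⟨d, hd, hdk⟩ := iter k
    obtain ⟨h1, h2⟩ := key d hd (by rw [hdk]; exact (stab_spec src tgt hG s _).2)
    rw [hdk] at h1 h2
    exact ⟨h1, by rw [h2]; exact hd⟩
  obtain ⟨k, hk⟩ := exists_srec src tgt hG s (restrictS s c)
  have hcls : dlvlClass src tgt s (Quotient.mk _ ⟨_, hk⟩) ≤ n := by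
    rw [dlvl_le_class src tgt hG]
    intro j
    simp only
    rw [stab_add src tgt hG, add_assoc, ← add_smul]
    exact (all _).1
  refine ⟨⟨Quotient.mk _ ⟨_, hk⟩, hcls⟩, ?_⟩
  apply Quotient.sound
  set q : RecSQuot src tgt s := Quotient.mk _ ⟨_, hk⟩ with hq
  have hout : Quotient.mk _ q.out = q := Quotient.out_eq q
  obtain ⟨j, hj⟩ := (mk_eq_iff src tgt hG s ⟨_, hk⟩ q.out).1 (hq.symm.trans hout.symm)
  simp only at hj
  refine ⟨lift s n q.out.1, Relation.ReflTransGen.refl, ?_⟩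
  rw [← hj, stab_add src tgt hG, add_assoc, ← add_smul]
  exact (all _).2

theorem card_eq (hG : StronglyConnected src tgt) (s : V) (n : ℕ) :
    Nat.card {q : RecSQuot src tgt s // dlvlClass src tgt s q ≤ n}
      = Nat.card (Quotient (joinSetoid src tgt n)) :=
  Nat.card_eq_of_bijective _
    ⟨toNonTerm_injective src tgt hG s n, toNonTerm_surjective src tgt hG s n⟩

theorem finsum_eq_of_card {α β : Type} [Finite α] [Finite β] (f : α → ℕ) (g : β → ℕ)
    (h : ∀ n, Nat.card {a // f a ≤ n} = Nat.card {b // g b ≤ n}) :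
    (∑ᶠ a, (X : Polynomial ℤ) ^ f a) = ∑ᶠ b, (X : Polynomial ℤ) ^ g b := by
  classical
  have := Fintype.ofFinite α
  have := Fintype.ofFinite β
  rw [finsum_eq_sum_of_fintype, finsum_eq_sum_of_fintype]
  ext n
  simp only [Polynomial.finsetSum_coeff, Polynomial.coeff_X_pow, Finset.sum_boole]
  have h' : ∀ n, #{a | f a ≤ n} = #{b | g b ≤ n} := by
    intro n
    have := h n
    rwa [Nat.card_eq_fintype_card, Nat.card_eq_fintype_card, Fintype.card_subtype,
      Fintype.card_subtype] at this
  have hsplit : ∀ {γ : Type} [Fintype γ] (k : γ → ℕ) (n : ℕ),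
      #{a | k a ≤ n + 1} = #{a | k a ≤ n} + #{a | n + 1 = k a} := by
    intro γ _ k n
    rw [← Finset.card_union_of_disjoint]
    · congr 1
      ext a
      simp only [Finset.mem_filter, Finset.mem_union, Finset.mem_univ, true_and]
      omega
    · rw [Finset.disjoint_filter]
      intro a _ h1 h2
      omega
  congr 1
  rcases n with _ | n
  · have := h' 0
    simpa only [Nat.le_zero, eq_comm] using this
  · have h1 := h' (n + 1)
    rw [hsplit f n, hsplit g n, h' n] at h1
    omega

end Helpers

/-- For a strongly connected digraph, the Biggs–Merino polynomial
does not depend on the choice of the sink vertex. -/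
theorem biggsMerino_sink_independent [Nonempty V] (src tgt : E → V)
    (hG : StronglyConnected src tgt) (s s' : V) :
    BM src tgt s = BM src tgt s' := by
  have := finite_recS src tgt hG s
  have := finite_recS src tgt hG s'
  unfold BM
  refine finsum_eq_of_card _ _ fun n => ?_
  rw [card_eq src tgt hG s n, card_eq src tgt hG s' n]

end SandpileBM
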